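/- arXiv:2208.05078 — 2 statements merged into one kernel-verified Lean document; each statement's English description precedes it below -/
import Mathlib

section
/- For each dimension s ≥ 1 there exists a constant C > 0 (depending on s) such that, as N → ∞, |{𝐤 ∈ ℕ₀^s ∖ {0} : ‖𝛋‖₁ = N}| ∼ (C / N^{3/4}) · exp(π√(sN/3)), i.e. the ratio of the two sides tends to 1. -/
open MeasureTheory ProbabilityTheory
open scoped ENNReal

namespace MedianQMC


/-- The set of 0-indexed positions of nonzero binary digits of `k`
(so `κ`, the 1-indexed set from the paper, is the image of this under `·+1`). -/
def bitFinset (k : ℕ) : Finset ℕ := (Finset.range (k+1)).filter (fun i => k.testBit i)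

/-- `‖κ‖₁ = ∑_{ℓ∈κ} ℓ` for the 1-indexed digit set `κ` of `k`. -/
def norm1 (k : ℕ) : ℕ := ∑ i ∈ bitFinset k, (i+1)

/-- `‖𝛋‖₁`. -/
def norm1Vec {s : ℕ} (k : Fin s → ℕ) : ℕ := ∑ j, norm1 (k j)

/-- `‖𝛋‖₀`, the total number of nonzero binary digits. -/
def norm0Vec {s : ℕ} (k : Fin s → ℕ) : ℕ := ∑ j, (bitFinset (k j)).card

/-- `‖⌈𝛋⌉‖₁`; note `⌈κ_j⌉ = Nat.size (k j)`. -/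
def ceilSum {s : ℕ} (k : Fin s → ℕ) : ℕ := ∑ j, Nat.size (k j)

/-- the support `s(𝐤)`. -/
def supp {s : ℕ} (k : Fin s → ℕ) : Finset (Fin s) := Finset.univ.filter (fun j => k j ≠ 0)

/-- Row `i` (0-indexed; paper row `i+1`) of `C j`, as a vector, `0` if out of range. -/
def rowOf {s m : ℕ} (C : Fin s → Matrix (Fin m) (Fin m) (ZMod 2)) (j : Fin s) (i : ℕ) :
    Fin m → ZMod 2 :=
  fun c => if h : i < m then C j ⟨i, h⟩ c else 0

/-- The row space of the stacked matrix `C^{(q)}` consisting of the first `q j` rows of each `C j`. -/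
def rowSpace {s m : ℕ} (C : Fin s → Matrix (Fin m) (Fin m) (ZMod 2)) (q : Fin s → ℕ) :
    Submodule (ZMod 2) (Fin m → ZMod 2) :=
  Submodule.span (ZMod 2) {v | ∃ j i, i < q j ∧ v = rowOf C j i}

/-- The rank of the stacked matrix `C^{(q)}`. -/
noncomputable def stackRank {s m : ℕ} (C : Fin s → Matrix (Fin m) (Fin m) (ZMod 2))
    (q : Fin s → ℕ) : ℕ :=
  Module.finrank (ZMod 2) (rowSpace C q)

/-- `C₁,…,C_s` generate a digital `(t,m,s)`-net in base 2: every stacked matrix `C^{(q)}`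
with `∑ q j = m - t` has full row rank `m - t`.  (Note each row of `C^{(q)}` is a genuine
row since `q j ≤ m - t ≤ m` automatically.) -/
def IsDigitalNet {s m : ℕ} (t : ℕ) (C : Fin s → Matrix (Fin m) (Fin m) (ZMod 2)) : Prop :=
  ∀ q : Fin s → ℕ, (∑ j, q j) = m - t → stackRank C q = m - t

/-- structural constraints of a linear scramble matrix with rows indexed by `ℕ`
(0-indexed; paper row `ℓ` is row `ℓ-1` here): ones on the diagonal, zeros above it. -/
def IsLinearScramble {s m : ℕ} (M : Fin s → ℕ → Fin m → ZMod 2) : Prop :=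
  ∀ j : Fin s, ∀ r : Fin m, M j (r : ℕ) r = 1 ∧ ∀ ℓ : ℕ, ℓ < (r : ℕ) → M j ℓ r = 0

/-- The condition `∑_{j=1}^s k⃗_jᵀ M_j C_j = 0`. -/
def ZeroCond {s m : ℕ} (C : Fin s → Matrix (Fin m) (Fin m) (ZMod 2))
    (M : Fin s → ℕ → Fin m → ZMod 2) (k : Fin s → ℕ) : Prop :=
  ∀ c : Fin m, (∑ j, ∑ i ∈ bitFinset (k j), ∑ r : Fin m, M j i r * C j r c) = 0

/-- index type for the free (random) entries of the scramble matrices: entries strictly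
below the diagonal, i.e. with column index `< ` row index. -/
def FreeIdx (s m : ℕ) : Type := {p : Fin s × ℕ × Fin m // (p.2.2 : ℕ) < p.2.1}

/-- index type for all random bits of a scramble-with-digital-shift. -/
def ScrIdx (s m : ℕ) : Type := FreeIdx s m ⊕ (Fin s × ℕ)

variable {Ω : Type*}

/-- the family of free entries of the random matrices. -/
def freeVar {s m : ℕ} (M : Ω → Fin s → ℕ → Fin m → ZMod 2) : FreeIdx s m → Ω → ZMod 2 :=
  fun p ω => M ω p.1.1 p.1.2.1 p.1.2.2

/-- the family of all random bits of a scramble-with-digital-shift. -/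
def scrVar {s m : ℕ} (M : Ω → Fin s → ℕ → Fin m → ZMod 2)
    (D : Ω → Fin s → ℕ → ZMod 2) : ScrIdx s m → Ω → ZMod 2
  | Sum.inl p => freeVar M p
  | Sum.inr q => fun ω => D ω q.1 q.2

/-- `x = Σ_{ℓ≥1} 2^{−ℓ} y_ℓ` (here `y` is 0-indexed). -/
noncomputable def coordI (y : ℕ → ZMod 2) : ℝ := ∑' ℓ : ℕ, ((y ℓ).val : ℝ) / 2 ^ (ℓ + 1)

/-- finite-precision coordinate `x = Σ_{ℓ=1}^E 2^{−ℓ} y_ℓ`. -/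
noncomputable def coordF (E : ℕ) (y : ℕ → ZMod 2) : ℝ :=
  ∑ ℓ ∈ Finset.range E, ((y ℓ).val : ℝ) / 2 ^ (ℓ + 1)

/-- digit string `M_j C_j ī + D_j` of the scrambled point `x_{ij}`. -/
def scrDigits {s m : ℕ} (C : Fin s → Matrix (Fin m) (Fin m) (ZMod 2))
    (M : Fin s → ℕ → Fin m → ZMod 2) (D : Fin s → ℕ → ZMod 2) (i : ℕ) (j : Fin s) :
    ℕ → ZMod 2 :=
  fun ℓ => (∑ r : Fin m, M j ℓ r * ∑ c : Fin m, C j r c *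
      (if i.testBit (c : ℕ) then 1 else 0)) + D j ℓ

/-- infinite-precision estimator `μ̂_∞ = 2^{-m} ∑_{i=0}^{2^m-1} f(x_i)`. -/
noncomputable def estInf {s m : ℕ} (f : (Fin s → ℝ) → ℝ)
    (C : Fin s → Matrix (Fin m) (Fin m) (ZMod 2))
    (M : Fin s → ℕ → Fin m → ZMod 2) (D : Fin s → ℕ → ZMod 2) : ℝ :=
  ((2 : ℝ) ^ m)⁻¹ * ∑ i ∈ Finset.range (2 ^ m), f (fun j => coordI (scrDigits C M D i j))

/-- precision-`E` estimator `μ̂_E`. -/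
noncomputable def estE {s m : ℕ} (E : ℕ) (f : (Fin s → ℝ) → ℝ)
    (C : Fin s → Matrix (Fin m) (Fin m) (ZMod 2))
    (M : Fin s → ℕ → Fin m → ZMod 2) (D : Fin s → ℕ → ZMod 2) : ℝ :=
  ((2 : ℝ) ^ m)⁻¹ * ∑ i ∈ Finset.range (2 ^ m), f (fun j => coordF E (scrDigits C M D i j))

/-- half-open unit cube `[0,1)^s`. -/
def cube (s : ℕ) : Set (Fin s → ℝ) := Set.univ.pi fun _ => Set.Ico (0:ℝ) 1

/-- closed unit cube `[0,1]^s`. -/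
def cubeC (s : ℕ) : Set (Fin s → ℝ) := Set.univ.pi fun _ => Set.Icc (0:ℝ) 1

/-- `ℓ`-th (0-indexed; paper `ℓ+1`) binary digit of `x ∈ [0,1)`, using the expansion ending
in zeros for dyadic rationals. -/
noncomputable def rdigit (x : ℝ) (i : ℕ) : ℕ := (⌊x * 2 ^ (i+1)⌋).toNat % 2

/-- Walsh function `wal_k`. -/
noncomputable def walsh (k : ℕ) (x : ℝ) : ℝ := (-1 : ℝ) ^ (∑ i ∈ bitFinset k, rdigit x i)

/-- multivariate Walsh function `wal_𝐤`. -/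
noncomputable def walshVec {s : ℕ} (k : Fin s → ℕ) (x : Fin s → ℝ) : ℝ :=
  ∏ j, walsh (k j) (x j)

/-- Walsh coefficient `f̂(𝐤)`. -/
noncomputable def fhat {s : ℕ} (f : (Fin s → ℝ) → ℝ) (k : Fin s → ℕ) : ℝ :=
  ∫ x in cube s, f x * walshVec k x

/-- the sign `(−1)^{Σ_j k⃗_jᵀ D_j}`. -/
noncomputable def walshSign {s : ℕ} (D : Fin s → ℕ → ZMod 2) (k : Fin s → ℕ) : ℝ :=
  (-1 : ℝ) ^ (∑ j, ∑ i ∈ bitFinset (k j), (D j i).val)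

/-- the constant `λ = 3 log(2)²/π²`. -/
noncomputable def lam : ℝ := 3 * Real.log 2 ^ 2 / Real.pi ^ 2

/-- the `i`-th smallest (0-indexed) of the values `v`. -/
noncomputable def orderStat {n : ℕ} (v : Fin n → ℝ) (i : ℕ) : ℝ :=
  (((List.ofFn v).mergeSort fun a b => @decide (a ≤ b) (Classical.propDecidable _)).getD i 0)

end MedianQMC

namespace MedianQMC

section analytic
open Complex Filter Topology

/-- `∏ (1 - q^(n+1))`. -/
noncomputable def PP (q : ℂ) : ℂ := ∏' n : ℕ, (1 - q ^ (n + 1))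

/-- `∏ (1 + q^(n+1))`. -/
noncomputable def GG (q : ℂ) : ℂ := ∏' n : ℕ, (1 + q ^ (n + 1))

lemma PP_tendsto : Tendsto PP (𝓝 0) (𝓝 1) := by
  have h := (ModularForm.differentiableOn_tprod_one_sub_pow.differentiableAt
    (Metric.isOpen_ball.mem_nhds (by simp : (0:ℂ) ∈ Metric.ball (0:ℂ) 1))).continuousAt
  have h2 : ContinuousAt PP 0 := h
  have h3 : PP 0 = 1 := by simp [PP]
  simpa [ContinuousAt, h3] using h2

lemma mult_GG {q : ℂ} (hq : ‖q‖ < 1) : Multipliable fun n : ℕ ↦ 1 + q ^ (n + 1) := by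
  apply multipliable_one_add_of_summable
  simpa using (summable_nat_add_iff 1).mpr (summable_geometric_of_lt_one (norm_nonneg _) hq)

lemma PP_ne_zero {q : ℂ} (hq : ‖q‖ < 1) : PP q ≠ 0 := by
  have := tprod_one_add_ne_zero_of_summable (f := fun n : ℕ ↦ -q ^ (n+1)) (fun i h => by
      have h1 : q ^ (i+1) = 1 := by linear_combination -h
      have h2 : ‖q‖ ^ (i+1) = 1 := by rw [← norm_pow, h1, norm_one]
      have := pow_lt_one₀ (norm_nonneg q) hq (Nat.succ_ne_zero i)
      simp at this
      linarith) (by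
      simpa using (summable_nat_add_iff 1).mpr (summable_geometric_of_lt_one (norm_nonneg _) hq))
  simpa [PP, sub_eq_add_neg] using this

lemma GG_mul_PP {q : ℂ} (hq : ‖q‖ < 1) : GG q * PP q = PP (q ^ 2) := by
  unfold GG PP
  rw [← (mult_GG hq).tprod_mul (ModularForm.multipliable_one_sub_pow hq)]
  congr 1; ext n; ring

lemma eta_eq (τ : ℂ) : ModularForm.eta (I * τ / (2 * Real.pi)) = cexp (-τ / 24) * PP (cexp (-τ)) := by
  have hpi : (Real.pi : ℂ) ≠ 0 := by exact_mod_cast Real.pi_ne_zero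
  have e : 2 * (Real.pi:ℂ) * I * (I * τ / (2 * Real.pi)) = -τ := by
    field_simp; rw [I_sq]; ring
  unfold ModularForm.eta PP
  simp only [ModularForm.eta_q_eq_pow, e]
  congr 1
  unfold Function.Periodic.qParam
  rw [e]; simp

lemma eta_trans {τ : ℂ} (hτ : 0 < τ.re) :
    cexp (-(4 * Real.pi ^ 2 / τ) / 24) * PP (cexp (-(4 * Real.pi ^ 2 / τ))) =
      (sqrt I)⁻¹ * (sqrt (I * τ / (2 * Real.pi)) * (cexp (-τ / 24) * PP (cexp (-τ)))) := by
  have hpi : (Real.pi : ℂ) ≠ 0 := by exact_mod_cast Real.pi_ne_zero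
  have hτ0 : τ ≠ 0 := by rintro rfl; simp at hτ
  have hm : (I * τ / (2 * Real.pi)) ∈ UpperHalfPlane.upperHalfPlaneSet := by
    show 0 < (I * τ / (2 * Real.pi)).im
    have : I * τ / (2 * Real.pi) = ((1 / (2 * Real.pi) : ℝ) : ℂ) * (I * τ) := by
      push_cast; ring
    rw [this, Complex.im_ofReal_mul]
    simp only [mul_im, I_re, I_im, zero_mul, one_mul, zero_add]
    positivity
  have h := ModularForm.eta_comp_eq_csqrt_I_inv hm
  simp only [Function.comp, Pi.smul_apply, Pi.mul_apply, smul_eq_mul] at h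
  rw [eta_eq τ, show -1 / (I * τ / (2 * Real.pi)) = I * (4 * Real.pi ^ 2 / τ) / (2 * Real.pi) by
    field_simp; rw [I_sq]; ring, eta_eq] at h
  exact h

lemma csqrt_two_mul {z : ℂ} (hz : z ≠ 0) : sqrt (2 * z) = (Real.sqrt 2 : ℂ) * sqrt z := by
  have h2 : (2:ℂ) = ((2:ℝ):ℂ) := by norm_num
  rw [sqrt_eq_exp (by simpa using hz), sqrt_eq_exp hz, h2, Complex.log_ofReal_mul (by norm_num) hz,
    add_div, Complex.exp_add, Real.sqrt_eq_rpow, Real.rpow_def_of_pos (by norm_num)]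
  push_cast
  ring_nf

lemma GG_formula {τ : ℂ} (hτ : 0 < τ.re) :
    GG (cexp (-τ)) = ((Real.sqrt 2)⁻¹ : ℝ) * cexp (Real.pi ^ 2 / (12 * τ)) * cexp (τ / 24) *
      (PP (cexp (-(2 * Real.pi ^ 2 / τ))) / PP (cexp (-(4 * Real.pi ^ 2 / τ)))) := by
  have hpi : (Real.pi : ℂ) ≠ 0 := by exact_mod_cast Real.pi_ne_zero
  have hτ0 : τ ≠ 0 := by rintro rfl; simp at hτ
  have h1 := eta_trans hτ
  have h2 := eta_trans (τ := 2 * τ) (by simpa using hτ)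
  rw [show I * (2 * τ) / (2 * Real.pi) = 2 * (I * τ / (2 * Real.pi)) by ring, csqrt_two_mul (by
    simp [hτ0, hpi]), show 4 * (Real.pi:ℂ) ^ 2 / (2 * τ) = 2 * Real.pi ^ 2 / τ by
    field_simp; norm_num] at h2
  have hq : ‖cexp (-τ)‖ < 1 := by
    rw [Complex.norm_exp]; simpa using hτ
  have hq4 : ‖cexp (-(4 * Real.pi ^ 2 / τ))‖ < 1 := by
    rw [Complex.norm_exp]
    have : (4 * (Real.pi:ℂ) ^ 2 / τ) = ((4 * Real.pi ^ 2 : ℝ) : ℂ) * τ⁻¹ := by push_cast; ring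
    rw [this, neg_re, re_ofReal_mul, inv_re, Real.exp_lt_one_iff, neg_lt_zero]
    have := Complex.normSq_pos.2 hτ0
    positivity
  have hg := GG_mul_PP hq
  rw [← Complex.exp_nat_mul, show ((2:ℕ):ℂ) * -τ = -(2 * τ) by push_cast; ring] at hg
  have hP := PP_ne_zero hq
  have hP4 := PP_ne_zero hq4
  have hs2 : (Real.sqrt 2 : ℂ) ≠ 0 := by
    exact_mod_cast (Real.sqrt_pos.2 (by norm_num : (0:ℝ) < 2)).ne'
  have hI : sqrt I ≠ 0 := by rw [sqrt_eq_exp I_ne_zero]; exact exp_ne_zero _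
  have hz : sqrt (I * τ / (2 * Real.pi)) ≠ 0 := by
    rw [sqrt_eq_exp (by simp [hτ0, hpi])]; exact exp_ne_zero _
  rw [← hg] at h2
  set A := sqrt I
  set B := sqrt (I * τ / (2 * Real.pi))
  set P := PP (cexp (-τ))
  set P4 := PP (cexp (-(4 * Real.pi ^ 2 / τ)))
  set P2 := PP (cexp (-(2 * Real.pi ^ 2 / τ)))
  have e1 : cexp (-(4 * Real.pi ^ 2 / τ) / 24) = (cexp (Real.pi ^ 2 / (12 * τ)))⁻¹ ^ 2 := by
    rw [← Complex.exp_neg, ← Complex.exp_nat_mul]; congr 1; push_cast; field_simp; norm_num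
  have e2 : cexp (-(2 * Real.pi ^ 2 / τ) / 24) = (cexp (Real.pi ^ 2 / (12 * τ)))⁻¹ := by
    rw [← Complex.exp_neg]; congr 1; field_simp; norm_num
  have e3 : cexp (-τ / 24) = (cexp (τ / 24))⁻¹ := by
    rw [← Complex.exp_neg]; congr 1; ring
  have e4 : cexp (-(2 * τ) / 24) = (cexp (τ / 24))⁻¹ ^ 2 := by
    rw [← Complex.exp_neg, ← Complex.exp_nat_mul]; congr 1; push_cast; ring
  rw [e1, e3] at h1
  rw [e2, e4] at h2
  have hX := Complex.exp_ne_zero (Real.pi ^ 2 / (12 * τ))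
  have hY := Complex.exp_ne_zero (τ / 24)
  set X := cexp (Real.pi ^ 2 / (12 * τ))
  set Y := cexp (τ / 24)
  push_cast
  have h1' : P4 * A * Y = X ^ 2 * B * P := by
    field_simp at h1; linear_combination h1
  have h2' : P2 * A * Y ^ 2 = X * (Real.sqrt 2) * B * (GG (cexp (-τ)) * P) := by
    field_simp at h2; linear_combination h2
  field_simp
  have : X * B * P * (GG (cexp (-τ)) * (Real.sqrt 2) * P4 - X * Y * P2) = 0 := by
    linear_combination -P4 * h2' + Y * P2 * h1'
  have h3 := (mul_eq_zero.1 this).resolve_left (by simp [hX, hz, hP])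
  linear_combination h3


noncomputable def tauf (β u : ℝ) : ℂ := (β : ℂ) ^ 2 + I * (β : ℂ) ^ 3 * u

lemma tauf_re (β u : ℝ) : (tauf β u).re = β ^ 2 := by
  have : tauf β u = ((β ^ 2 : ℝ) : ℂ) + ((β ^ 3 * u : ℝ) : ℂ) * I := by
    unfold tauf; push_cast; ring
  rw [this]; simp [-ofReal_pow, -ofReal_mul]

noncomputable def Hc (s : ℕ) (c β u : ℝ) : ℂ :=
  GG (cexp (-tauf β u)) ^ s * cexp (-(c / (β:ℂ) ^ 2) + I * c * u / β)

lemma Hc_eq (s : ℕ) {β : ℝ} (u : ℝ) (hβ : 0 < β) :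
    Hc s (s * Real.pi ^ 2 / 12) β u = (((Real.sqrt 2)⁻¹ : ℝ) : ℂ) ^ s *
      cexp (-((s * Real.pi ^ 2 / 12 : ℝ) * u ^ 2) / (1 + I * β * u)) *
      (cexp (tauf β u / 24) *
      (PP (cexp (-(2 * Real.pi ^ 2 / tauf β u))) / PP (cexp (-(4 * Real.pi ^ 2 / tauf β u))))) ^ s := by
  have hre : 0 < (tauf β u).re := by rw [tauf_re]; positivity
  have hb : (β : ℂ) ≠ 0 := by exact_mod_cast hβ.ne'
  have h1 : (1 + I * β * u : ℂ) ≠ 0 := by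
    intro h
    have := congrArg Complex.re h
    simp at this
  have ht : tauf β u = β ^ 2 * (1 + I * β * u) := by unfold tauf; ring
  unfold Hc
  rw [GG_formula hre]
  rw [mul_assoc, mul_assoc, mul_pow, mul_pow _ (_ * _) s, ← Complex.exp_nat_mul]
  have : cexp (-((s * Real.pi ^ 2 / 12 : ℝ) * u ^ 2) / (1 + I * β * u)) =
    cexp (s * (Real.pi ^ 2 / (12 * tauf β u))) *
      cexp (-((s * Real.pi ^ 2 / 12 : ℝ) / (β:ℂ) ^ 2) + I * (s * Real.pi ^ 2 / 12 : ℝ) * u / β) := by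
    rw [← Complex.exp_add, ht]
    congr 1
    push_cast
    generalize hw : (1 + I * β * u : ℂ) = w at h1 ⊢
    have e1 : I * β * u = w - 1 := by rw [← hw]; ring
    have e2 : (β : ℂ) ^ 2 * u ^ 2 = -(w - 1) ^ 2 := by
      rw [← e1]; linear_combination ((β : ℂ) ^ 2 * u ^ 2) * I_sq
    field_simp
    linear_combination (-(s:ℂ)) * e2 - s * w * e1
  rw [this]
  ring

lemma Hc_tendsto (s : ℕ) (u : ℝ) :
    Tendsto (fun β => Hc s (s * Real.pi ^ 2 / 12) β u) (𝓝[>] 0)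
      (𝓝 ((((Real.sqrt 2)⁻¹ ^ s * Real.exp (-(s * Real.pi ^ 2 / 12) * u ^ 2) : ℝ)) : ℂ)) := by
  have hb : Tendsto (fun β : ℝ => (β : ℂ)) (𝓝[>] 0) (𝓝 0) := by
    have : Tendsto (fun β : ℝ => (β : ℂ)) (𝓝 0) (𝓝 ((0:ℝ):ℂ)) := continuous_ofReal.tendsto 0
    simpa using this.mono_left nhdsWithin_le_nhds
  have ht : Tendsto (fun β : ℝ => tauf β u) (𝓝[>] 0) (𝓝 0) := by
    have := (hb.pow 2).add (((hb.pow 3).const_mul I).mul_const (u : ℂ))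
    simpa [tauf] using this
  have hinv (K : ℝ) (hK : 0 < K) : Tendsto (fun β : ℝ => cexp (-(K / tauf β u))) (𝓝[>] 0) (𝓝 0) := by
    rw [tendsto_zero_iff_norm_tendsto_zero]
    have : Tendsto (fun β : ℝ => K * (β ^ 2)⁻¹ * (1 + β ^ 2 * u ^ 2)⁻¹) (𝓝[>] 0) atTop := by
      have h1 : Tendsto (fun β : ℝ => (β ^ 2)⁻¹) (𝓝[>] 0) atTop := by
        have := (tendsto_inv_nhdsGT_zero (𝕜 := ℝ)).comp (f := fun β : ℝ => β ^ 2) (x := 𝓝[>] 0)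
          (tendsto_nhdsWithin_iff.2 ⟨by
            have : Tendsto (fun β : ℝ => β ^ 2) (𝓝 0) (𝓝 (0 ^ 2)) := (continuous_pow 2).tendsto 0
            simpa using this.mono_left nhdsWithin_le_nhds, by
            filter_upwards [self_mem_nhdsWithin] with β hβ
            have : 0 < β := hβ
            show 0 < β ^ 2
            positivity⟩)
        exact this
      have h2 : Tendsto (fun β : ℝ => (1 + β ^ 2 * u ^ 2)⁻¹) (𝓝[>] 0) (𝓝 1) := by
        have hc : ContinuousAt (fun β : ℝ => (1 + β ^ 2 * u ^ 2)⁻¹) 0 := by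
          apply ContinuousAt.inv₀ (by fun_prop); simp
        have := hc.tendsto.mono_left (nhdsWithin_le_nhds (s := Set.Ioi 0))
        simpa using this
      exact (h1.const_mul_atTop hK).atTop_mul_pos one_pos h2
    refine (Real.tendsto_exp_neg_atTop_nhds_zero.comp this).congr' ?_
    filter_upwards [self_mem_nhdsWithin] with β hβ
    have hβ' : 0 < β := hβ
    rw [Complex.norm_exp, Function.comp]
    congr 1
    have e : tauf β u = ((β ^ 2 : ℝ) : ℂ) * (⟨1, β * u⟩ : ℂ) := by
      unfold tauf; rw [Complex.mk_eq_add_mul_I]; push_cast; ring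
    rw [e, neg_re, div_eq_mul_inv, re_ofReal_mul, mul_inv, ← ofReal_inv, re_ofReal_mul, inv_re]
    simp [normSq_apply]
    ring
  have h2 := PP_tendsto.comp (hinv (2 * Real.pi ^ 2) (by positivity))
  have h4 := PP_tendsto.comp (hinv (4 * Real.pi ^ 2) (by positivity))
  have he : Tendsto (fun β : ℝ => cexp (tauf β u / 24)) (𝓝[>] 0) (𝓝 1) := by
    have := (Complex.continuous_exp.tendsto _).comp (ht.div_const 24)
    simpa [Function.comp_def] using this
  have hd : Tendsto (fun β : ℝ => (1 + I * β * u : ℂ)) (𝓝[>] 0) (𝓝 1) := by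
    have := ((hb.const_mul I).mul_const (u : ℂ)).const_add 1
    simpa using this
  have hm : Tendsto (fun β : ℝ => cexp (-((s * Real.pi ^ 2 / 12 : ℝ) * u ^ 2) / (1 + I * β * u)))
      (𝓝[>] 0) (𝓝 (cexp (-((s * Real.pi ^ 2 / 12 : ℝ) * u ^ 2)))) := by
    have := (Complex.continuous_exp.tendsto _).comp
      ((tendsto_const_nhds (x := -(((s * Real.pi ^ 2 / 12 : ℝ) : ℂ) * u ^ 2))).div hd one_ne_zero)
    simpa [Function.comp_def] using this
  have hall := (hm.const_mul ((((Real.sqrt 2)⁻¹ : ℝ) : ℂ) ^ s)).mul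
    ((he.mul (h2.div h4 one_ne_zero)).pow s)
  have hlim : (((Real.sqrt 2)⁻¹ : ℝ) : ℂ) ^ s * cexp (-((s * Real.pi ^ 2 / 12 : ℝ) * u ^ 2)) *
      (1 * (1 / 1)) ^ s =
      ((((Real.sqrt 2)⁻¹ ^ s * Real.exp (-(s * Real.pi ^ 2 / 12) * u ^ 2) : ℝ)) : ℂ) := by
    push_cast; simp
  rw [hlim] at hall
  refine hall.congr' ?_
  filter_upwards [self_mem_nhdsWithin] with β hβ
  rw [Hc_eq s u hβ]
  simp [Function.comp]

lemma factor_bound (w : ℂ) (hw : ‖w‖ ≤ 1) :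
    ‖1 + w‖ ≤ ‖1 + (‖w‖ : ℂ)‖ * Real.exp (-(1/4) * (‖w‖ - w.re)) := by
  have h0 := norm_nonneg w
  have hre := Complex.re_le_norm w
  have e1 : ‖1 + (‖w‖ : ℂ)‖ = 1 + ‖w‖ := by
    rw [show (1 + (‖w‖ : ℂ)) = ((1 + ‖w‖ : ℝ) : ℂ) by push_cast; rfl, Complex.norm_real,
      Real.norm_of_nonneg (by positivity)]
  rw [e1]
  refine (sq_le_sq₀ (norm_nonneg _) (by positivity)).1 ?_
  have e2 : ‖1 + w‖ ^ 2 = (1 + ‖w‖) ^ 2 - 2 * (‖w‖ - w.re) := by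
    have a := Complex.sq_norm (1 + w)
    have b := Complex.sq_norm w
    rw [normSq_apply] at a b
    simp at a
    nlinarith
  rw [e2, mul_pow, ← Real.exp_nat_mul]
  have h3 := Real.add_one_le_exp (((2:ℕ):ℝ) * (-(1/4) * (‖w‖ - w.re)))
  push_cast at h3 ⊢
  have h4 : (1 + ‖w‖) ^ 2 * (2 * (-(1/4) * (‖w‖ - w.re)) + 1) ≤
    (1 + ‖w‖) ^ 2 * Real.exp (2 * (-(1/4) * (‖w‖ - w.re))) := by gcongr
  have h5 : (1 + ‖w‖) ^ 2 ≤ 4 := by nlinarith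
  nlinarith

lemma GG_norm_le {q : ℂ} (hq : ‖q‖ < 1) :
    ‖GG q‖ ≤ ‖GG (‖q‖ : ℂ)‖ * Real.exp (-(1/4) * ((1 - ‖q‖)⁻¹ - ((1 - q)⁻¹).re)) := by
  have hq' : ‖(‖q‖ : ℂ)‖ < 1 := by simpa using hq
  have t1 := (mult_GG hq).hasProd.tendsto_prod_nat.norm
  have t2 := (mult_GG hq').hasProd.tendsto_prod_nat.norm
  have s1 : HasSum (fun n : ℕ => ‖q‖ ^ (n + 1) - (q ^ (n + 1)).re)
      ((1 - ‖q‖)⁻¹ - ((1 - q)⁻¹).re) := by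
    have a := (hasSum_geometric_of_lt_one (norm_nonneg q) hq)
    have b := Complex.hasSum_re (hasSum_geometric_of_norm_lt_one hq)
    have := (hasSum_nat_add_iff' 1).2 (a.sub b)
    simpa using this
  have t3 := (Real.continuous_exp.tendsto _).comp (s1.tendsto_sum_nat.const_mul (-(1/4)))
  refine le_of_tendsto_of_tendsto' t1 (t2.mul t3) fun M => ?_
  simp only [Function.comp, norm_prod, Finset.mul_sum, Real.exp_sum, ← Finset.prod_mul_distrib]
  refine Finset.prod_le_prod (fun _ _ => norm_nonneg _) fun i _ => ?_
  have := factor_bound (q ^ (i + 1)) (by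
    rw [norm_pow]; exact pow_le_one₀ (norm_nonneg _) hq.le)
  simpa using this

lemma D_lower {α θ : ℝ} (hα : 0 < α) (hα' : α ≤ 1 / 2) (hθ : |θ| ≤ Real.pi) {q : ℂ}
    (hq : q = cexp (-(α + I * θ))) :
    ‖q‖ < 1 ∧ ‖q‖ = Real.exp (-α) ∧
    θ ^ 2 / (α * (Real.pi ^ 2 * α ^ 2 + 2 * θ ^ 2)) ≤ (1 - ‖q‖)⁻¹ - ((1 - q)⁻¹).re := by
  have hn : ‖q‖ = Real.exp (-α) := by rw [hq, Complex.norm_exp]; simp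
  have hr1 : ‖q‖ < 1 := by rw [hn]; simpa using hα
  have hre : q.re = ‖q‖ * Real.cos θ := by
    rw [hn, hq, Complex.exp_re]; simp
  refine ⟨hr1, hn, ?_⟩
  have hr2 : 1 - α ≤ ‖q‖ := by rw [hn]; linarith [Real.add_one_le_exp (-α)]
  have hcos := Real.cos_le_one_sub_mul_cos_sq hθ
  have hnq : normSq (1 - q) = 1 - 2 * q.re + ‖q‖ ^ 2 := by
    rw [Complex.sq_norm, normSq_apply, normSq_apply]; simp; ring
  rw [inv_re, hnq, sub_re, one_re, hre]
  generalize ‖q‖ = r at *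
  have hc : 2 * θ ^ 2 / Real.pi ^ 2 ≤ 1 - Real.cos θ := by
    have : 2 / Real.pi ^ 2 * θ ^ 2 = 2 * θ ^ 2 / Real.pi ^ 2 := by ring
    linarith
  generalize Real.cos θ = C at *
  have hpi := Real.pi_pos
  have hy0 : 0 ≤ 2 * θ ^ 2 / Real.pi ^ 2 := by positivity
  have hy : θ ^ 2 / Real.pi ^ 2 ≤ r * (1 - C) := by
    have : 2 * θ ^ 2 / Real.pi ^ 2 = 2 * (θ ^ 2 / Real.pi ^ 2) := by ring
    nlinarith
  set ε := 1 - r with hε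
  have hε0 : 0 < ε := by linarith
  have hεα : ε ≤ α := by linarith
  set y := r * (1 - C) with hy'
  have hy1 : 0 ≤ y := le_trans (by positivity) hy
  have e1 : 1 - 2 * (r * C) + r ^ 2 = ε ^ 2 + 2 * y := by rw [hε, hy']; ring
  have e2 : 1 - r * C = ε + y := by rw [hε, hy']; ring
  rw [e1, e2]
  have step1 : y / (ε * (ε ^ 2 + 2 * y)) ≤ ε⁻¹ - (ε + y) / (ε ^ 2 + 2 * y) := by
    rw [← sub_nonneg]
    have : ε⁻¹ - (ε + y) / (ε ^ 2 + 2 * y) - y / (ε * (ε ^ 2 + 2 * y)) =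
      y * (1 - ε) / (ε * (ε ^ 2 + 2 * y)) := by field_simp; ring
    rw [this]
    have : 0 ≤ 1 - ε := by linarith
    positivity
  have step2 : y / (α * (α ^ 2 + 2 * y)) ≤ y / (ε * (ε ^ 2 + 2 * y)) := by gcongr
  have step3 : θ ^ 2 / (α * (Real.pi ^ 2 * α ^ 2 + 2 * θ ^ 2)) ≤ y / (α * (α ^ 2 + 2 * y)) := by
    rw [div_le_iff₀ (by positivity)] at hy
    rw [div_le_div_iff₀ (by positivity) (by positivity)]
    have : 0 ≤ α ^ 3 * (y * Real.pi ^ 2 - θ ^ 2) := mul_nonneg (by positivity) (by linarith)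
    nlinarith
  linarith

lemma exp_dom {β u : ℝ} (hβ : 0 < β) (hu : |β ^ 3 * u| ≤ Real.pi) :
    Real.exp (-(1/4) * ((β ^ 3 * u) ^ 2 / (β ^ 2 * (Real.pi ^ 2 * (β ^ 2) ^ 2 + 2 * (β ^ 3 * u) ^ 2))))
      ≤ 24576 * Real.pi ^ 2 * (1 + u ^ 2)⁻¹ := by
  have hpi := Real.pi_gt_three
  have e : (β ^ 3 * u) ^ 2 / (β ^ 2 * (Real.pi ^ 2 * (β ^ 2) ^ 2 + 2 * (β ^ 3 * u) ^ 2)) =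
    u ^ 2 / (Real.pi ^ 2 + 2 * β ^ 2 * u ^ 2) := by
    have : Real.pi ^ 2 + 2 * β ^ 2 * u ^ 2 ≠ 0 := by positivity
    have h2 : β ^ 2 * (Real.pi ^ 2 * (β ^ 2) ^ 2 + 2 * (β ^ 3 * u) ^ 2) =
      β ^ 6 * (Real.pi ^ 2 + 2 * β ^ 2 * u ^ 2) := by ring
    rw [h2]; field_simp
  rw [e]
  set X := u ^ 2 / (Real.pi ^ 2 + 2 * β ^ 2 * u ^ 2) with hX
  have hX0 : 0 ≤ X := by positivity
  rw [show -(1/4) * X = -(X/4) by ring, Real.exp_neg]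
  have hu2 : β ^ 6 * u ^ 2 ≤ Real.pi ^ 2 := by
    have := sq_le_sq' (by linarith [abs_nonneg (β ^ 3 * u)]) hu
    rw [sq_abs] at this; nlinarith
  suffices h : (1 + u ^ 2) / (24576 * Real.pi ^ 2) ≤ Real.exp (X / 4) by
    calc (Real.exp (X / 4))⁻¹ ≤ ((1 + u ^ 2) / (24576 * Real.pi ^ 2))⁻¹ := by gcongr
      _ = _ := by rw [inv_div]; ring
  rw [div_le_iff₀ (by positivity)]
  by_cases hc : 2 * β ^ 2 * u ^ 2 ≤ Real.pi ^ 2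
  · have h1 : u ^ 2 ≤ X * (2 * Real.pi ^ 2) := by
      have : u ^ 2 = X * (Real.pi ^ 2 + 2 * β ^ 2 * u ^ 2) := by rw [hX]; field_simp
      nlinarith
    have h2 := Real.add_one_le_exp (X / 4)
    have : (X / 4 + 1) * (24576 * Real.pi ^ 2) ≤ Real.exp (X/4) * (24576 * Real.pi ^ 2) := by gcongr
    nlinarith
  · push Not at hc
    have h1 : 1 / (4 * β ^ 2) ≤ X := by
      rw [hX, div_le_div_iff₀ (by positivity) (by positivity)]
      nlinarith
    have h2 : u ^ 2 ≤ 64 * Real.pi ^ 2 * X ^ 3 := by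
      have a : (1 / (4 * β ^ 2)) ^ 3 ≤ X ^ 3 := by gcongr
      have b : (1 / (4 * β ^ 2)) ^ 3 = 1 / (64 * β ^ 6) := by field_simp; norm_num
      rw [b, div_le_iff₀ (by positivity)] at a
      have hb6 : 0 < β ^ 6 := by positivity
      have : β ^ 6 * u ^ 2 ≤ β ^ 6 * (64 * Real.pi ^ 2 * X ^ 3) := by nlinarith
      exact le_of_mul_le_mul_left this hb6
    have h3 : 1 + (X / 4) ^ 3 / 6 ≤ Real.exp (X / 4) := by
      have := Real.sum_le_exp_of_nonneg (x := X / 4) (by positivity) 4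
      simp [Finset.sum_range_succ, Nat.factorial] at this
      nlinarith [sq_nonneg X]
    have : (1 + (X / 4) ^ 3 / 6) * (24576 * Real.pi ^ 2) ≤ Real.exp (X/4) * (24576 * Real.pi ^ 2) := by
      gcongr
    nlinarith

lemma Hc_norm_le (s : ℕ) (hs : 1 ≤ s) (c : ℝ) {β u : ℝ} (hβ : 0 < β) (hβ' : β ≤ 1 / 2)
    (hu : |β ^ 3 * u| ≤ Real.pi) :
    ‖Hc s c β u‖ ≤ ‖Hc s c β 0‖ * (24576 * Real.pi ^ 2 * (1 + u ^ 2)⁻¹) := by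
  obtain ⟨h1, h2, h3⟩ := D_lower (α := β ^ 2) (θ := β ^ 3 * u) (by positivity) (by nlinarith) hu rfl
  have et : ((β ^ 2 : ℝ) : ℂ) + I * (β ^ 3 * u : ℝ) = tauf β u := by unfold tauf; push_cast; ring
  rw [et] at h1 h2 h3
  have hg := GG_norm_le h1
  rw [h2] at hg
  have e0 : cexp (-tauf β 0) = (Real.exp (-β ^ 2) : ℂ) := by unfold tauf; simp
  have n1 : ‖cexp (-(c / (β:ℂ) ^ 2) + I * c * u / β)‖ = Real.exp (-(c / β ^ 2)) := by
    rw [show -(c / (β:ℂ) ^ 2) + I * c * u / β =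
      ((-(c / β ^ 2) : ℝ) : ℂ) + ((c * u / β : ℝ) : ℂ) * I by push_cast; ring, Complex.norm_exp]
    simp [-ofReal_neg, -ofReal_div, -ofReal_mul, -ofReal_pow]
  have n2 : ‖cexp (-(c / (β:ℂ) ^ 2) + I * c * (0:ℝ) / β)‖ = Real.exp (-(c / β ^ 2)) := by
    rw [show -(c / (β:ℂ) ^ 2) + I * c * (0:ℝ) / β =
      ((-(c / β ^ 2) : ℝ) : ℂ) by push_cast; ring, Complex.norm_exp, ofReal_re]
  unfold Hc
  rw [norm_mul, norm_mul, norm_pow, norm_pow, n1, n2, e0]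
  set g := ‖GG (Real.exp (-β ^ 2) : ℂ)‖
  rw [← h2] at hg
  have hE : Real.exp (-(1/4) * ((1 - ‖cexp (-tauf β u)‖)⁻¹ - ((1 - cexp (-tauf β u))⁻¹).re)) ≤
     Real.exp (-(1/4) * ((β ^ 3 * u) ^ 2 / (β ^ 2 * (Real.pi ^ 2 * (β ^ 2) ^ 2 + 2 * (β ^ 3 * u) ^ 2)))) := by
    apply Real.exp_le_exp.2; linarith
  rw [h2] at hg hE
  have hb := exp_dom hβ hu
  set E := Real.exp (-(1/4) * ((β ^ 3 * u) ^ 2 / (β ^ 2 * (Real.pi ^ 2 * (β ^ 2) ^ 2 + 2 * (β ^ 3 * u) ^ 2))))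
    with hEdef
  have hE0 : 0 ≤ E := (Real.exp_pos _).le
  have hE1 : E ≤ 1 := by
    rw [hEdef, Real.exp_le_one_iff]
    have : 0 ≤ (β ^ 3 * u) ^ 2 / (β ^ 2 * (Real.pi ^ 2 * (β ^ 2) ^ 2 + 2 * (β ^ 3 * u) ^ 2)) := by
      positivity
    linarith
  have hg' : ‖GG (cexp (-tauf β u))‖ ≤ g * E := hg.trans (by gcongr)
  have : ‖GG (cexp (-tauf β u))‖ ^ s ≤ g ^ s * E := by
    calc _ ≤ (g * E) ^ s := by gcongr
      _ = g ^ s * E ^ s := mul_pow _ _ _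
      _ ≤ g ^ s * E := by
        gcongr
        exact pow_le_of_le_one hE0 hE1 (by omega)
  calc _ ≤ g ^ s * E * Real.exp (-(c / β ^ 2)) := by gcongr
    _ ≤ g ^ s * (24576 * Real.pi ^ 2 * (1 + u ^ 2)⁻¹) * Real.exp (-(c / β ^ 2)) := by gcongr
    _ = _ := by ring

lemma norm1_eq (k : ℕ) : norm1 k = ∑ i ∈ Finset.equivBitIndices k, (i + 1) := by
  unfold norm1
  congr 1
  ext i
  simp only [bitFinset, Finset.mem_filter, Finset.mem_range, Finset.equivBitIndices_apply,
    List.mem_toFinset, Nat.mem_bitIndices, and_iff_right_iff_imp]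
  intro h
  have := Nat.two_pow_le_of_mem_bitIndices (Nat.mem_bitIndices.2 h)
  have := Nat.lt_two_pow_self (n := i)
  omega

lemma one_var {q : ℂ} (hq : ‖q‖ < 1) :
    Summable (fun k : ℕ => ‖q ^ norm1 k‖) ∧ ∑' k : ℕ, q ^ norm1 k = GG q := by
  have hsum : Summable (fun n : ℕ => ‖q ^ (n + 1)‖) := by
    simpa using (summable_nat_add_iff 1).mpr (summable_geometric_of_lt_one (norm_nonneg _) hq)
  have h1 := summable_finsetProd_of_summable_norm hsum
  have hnorm : Summable (fun n : ℕ => ‖‖q ^ (n + 1)‖‖) := by simpa using hsum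
  have h2 := summable_finsetProd_of_summable_norm hnorm
  have e (k : ℕ) : q ^ norm1 k = ∏ i ∈ Finset.equivBitIndices k, q ^ (i + 1) := by
    rw [norm1_eq, Finset.prod_pow_eq_pow_sum]
  constructor
  · simp_rw [e, norm_prod]
    exact (Finset.equivBitIndices.summable_iff (f := fun T : Finset ℕ => ∏ i ∈ T, ‖q ^ (i+1)‖)).2 h2
  · simp_rw [e]
    rw [Finset.equivBitIndices.tsum_eq (fun T : Finset ℕ => ∏ i ∈ T, q ^ (i+1)), GG,
      tprod_one_add h1]

lemma pi_hasSum {f : ℕ → ℂ} (hf : Summable fun n => ‖f n‖) (s : ℕ) :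
    Summable (fun k : Fin s → ℕ => ‖∏ j, f (k j)‖) ∧
      HasSum (fun k : Fin s → ℕ => ∏ j, f (k j)) ((∑' n, f n) ^ s) := by
  induction s with
  | zero =>
    refine ⟨Summable.of_finite, ?_⟩
    simp
  | succ n ih =>
    obtain ⟨E, e⟩ : ∃ E : ℕ × (Fin n → ℕ) ≃ (Fin (n + 1) → ℕ),
        ∀ p, ∏ j, f (E p j) = f p.1 * ∏ j, f (p.2 j) :=
      ⟨Fin.consEquiv (fun _ => ℕ), fun p => by simp [Fin.prod_univ_succ, Fin.consEquiv]⟩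
    have e2 : (fun k : Fin (n + 1) → ℕ => ‖∏ j, f (k j)‖) ∘ E =
        fun p => ‖f p.1 * ∏ j, f (p.2 j)‖ := by
      funext p; simp only [Function.comp_apply, e]
    have e3 : (fun k : Fin (n + 1) → ℕ => ∏ j, f (k j)) ∘ E =
        fun p => f p.1 * ∏ j, f (p.2 j) := by
      funext p; simp only [Function.comp_apply, e]
    constructor
    · rw [← E.summable_iff, e2]
      exact Summable.mul_norm (g := fun k : Fin n → ℕ => ∏ j, f (k j)) hf ih.1
    · rw [← E.hasSum_iff, e3, pow_succ']
      exact HasSum.mul (g := fun k : Fin n → ℕ => ∏ j, f (k j)) hf.of_norm.hasSum ih.2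
        (summable_mul_of_summable_norm (g := fun k : Fin n → ℕ => ∏ j, f (k j)) hf ih.1)

lemma multi_var {q : ℂ} (hq : ‖q‖ < 1) (s : ℕ) :
    Summable (fun k : Fin s → ℕ => ‖q ^ norm1Vec k‖) ∧
      HasSum (fun k : Fin s → ℕ => q ^ norm1Vec k) (GG q ^ s) := by
  have h := one_var hq
  have := pi_hasSum h.1 s
  rw [h.2] at this
  simpa [norm1Vec, Finset.prod_pow_eq_pow_sum] using this

lemma coeff_integral (m N : ℕ) (α : ℝ) :
    ∫ θ in (-Real.pi)..Real.pi, cexp (-(α + I * θ)) ^ m * cexp (N * (α + I * θ)) =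
      if m = N then (2 * Real.pi : ℂ) else 0 := by
  have e (θ : ℝ) : cexp (-(α + I * θ)) ^ m * cexp (N * (α + I * θ)) =
      cexp (((N:ℂ) - m) * α) * cexp (((N:ℂ) - m) * I * θ) := by
    rw [← Complex.exp_nat_mul, ← Complex.exp_add, ← Complex.exp_add]; congr 1; ring
  simp_rw [e]
  rw [intervalIntegral.integral_const_mul]
  split_ifs with h
  · subst h; simp; ring
  · have hne : ((N:ℂ) - m) ≠ 0 := by
      rw [sub_ne_zero]; exact_mod_cast Ne.symm h
    rw [integral_exp_mul_complex (mul_ne_zero hne I_ne_zero)]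
    have : cexp (((N:ℂ) - m) * I * Real.pi) = cexp (((N:ℂ) - m) * I * (-Real.pi : ℝ)) := by
      rw [Complex.exp_eq_exp_iff_exists_int]
      exact ⟨(N:ℤ) - m, by push_cast; ring⟩
    rw [this]; simp

lemma cauchy_formula (s N : ℕ) {α : ℝ} (hα : 0 < α) :
    ∫ θ in (-Real.pi)..Real.pi, GG (cexp (-(α + I * θ))) ^ s * cexp (N * (α + I * θ)) =
      2 * Real.pi * ({k : Fin s → ℕ | norm1Vec k = N}.ncard : ℂ) := by
  have hn (θ : ℝ) : ‖cexp (-(α + I * θ))‖ = Real.exp (-α) := by rw [Complex.norm_exp]; simp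
  have hlt : Real.exp (-α) < 1 := by simpa using hα
  have hr : ‖((Real.exp (-α) : ℝ) : ℂ)‖ < 1 := by
    rw [Complex.norm_real, Real.norm_of_nonneg (Real.exp_pos _).le]; exact hlt
  have hsum : Summable (fun k : Fin s → ℕ => Real.exp (-α) ^ norm1Vec k) := by
    refine (multi_var hr s).1.congr fun k => ?_
    rw [norm_pow, Complex.norm_real, Real.norm_of_nonneg (Real.exp_pos _).le]
  have H : HasSum (fun k : Fin s → ℕ => ∫ θ in (-Real.pi)..Real.pi,
      cexp (-(α + I * θ)) ^ norm1Vec k * cexp (N * (α + I * θ)))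
      (∫ θ in (-Real.pi)..Real.pi, GG (cexp (-(α + I * θ))) ^ s * cexp (N * (α + I * θ))) := by
    apply intervalIntegral.hasSum_integral_of_dominated_convergence
      (fun k _ => Real.exp (-α) ^ norm1Vec k * Real.exp (N * α))
    · intro k
      apply Continuous.aestronglyMeasurable
      fun_prop
    · intro k
      refine .of_forall fun θ _ => ?_
      rw [norm_mul, norm_pow, hn, Complex.norm_exp]
      simp
    · exact .of_forall fun θ _ => hsum.mul_right _
    · exact intervalIntegrable_const
    · refine .of_forall fun θ _ => ?_
      exact (multi_var (by rw [hn]; exact hlt) s).2.mul_right _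
  simp_rw [coeff_integral] at H
  have hfin : {k : Fin s → ℕ | norm1Vec k = N}.Finite := by
    have h0 := hsum.tendsto_cofinite_zero.eventually (gt_mem_nhds (pow_pos (Real.exp_pos (-α)) N))
    refine Set.Finite.subset h0 fun k hk => ?_
    have hk' : norm1Vec k = N := hk
    simp [hk']
  have H2 : HasSum (fun k : Fin s → ℕ => if norm1Vec k = N then (2 * Real.pi : ℂ) else 0)
      (∑ k ∈ hfin.toFinset, if norm1Vec k = N then (2 * Real.pi : ℂ) else 0) := by
    apply hasSum_sum_of_ne_finset_zero
    intro k hk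
    simp at hk
    simp [hk]
  rw [H.unique H2, Finset.sum_congr rfl (g := fun _ => (2 * Real.pi : ℂ)) (by
    intro k hk; simp at hk; simp [hk]), Finset.sum_const, Set.ncard_eq_toFinset_card _ hfin]
  simp [mul_comm]

lemma Hc_continuous (s : ℕ) (c : ℝ) {β : ℝ} (hβ : 0 < β) : Continuous (Hc s c β) := by
  have hn (u : ℝ) : ‖cexp (-tauf β u)‖ < 1 := by
    rw [Complex.norm_exp, neg_re, tauf_re, Real.exp_lt_one_iff]
    have : 0 < β ^ 2 := by positivity
    linarith
  have hn2 (u : ℝ) : ‖cexp (-tauf β u) ^ 2‖ < 1 := by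
    rw [norm_pow]; exact pow_lt_one₀ (norm_nonneg _) (hn u) (by norm_num)
  have hP : ContinuousOn PP (Metric.ball 0 1) :=
    ModularForm.differentiableOn_tprod_one_sub_pow.continuousOn
  have hc : Continuous fun u : ℝ => cexp (-tauf β u) := by unfold tauf; fun_prop
  have h1 : Continuous fun u : ℝ => PP (cexp (-tauf β u)) :=
    hP.comp_continuous hc fun u => by simpa using hn u
  have h2 : Continuous fun u : ℝ => PP (cexp (-tauf β u) ^ 2) :=
    hP.comp_continuous (hc.pow 2) fun u => by simpa using hn2 u
  have h3 : Continuous fun u : ℝ => GG (cexp (-tauf β u)) := by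
    refine (h2.div h1 fun u => PP_ne_zero (hn u)).congr fun u => ?_
    rw [Pi.div_apply, ← GG_mul_PP (hn u), mul_div_assoc, div_self (PP_ne_zero (hn u)), mul_one]
  unfold Hc
  exact (h3.pow s).mul (by fun_prop)

lemma J_tendsto (s : ℕ) (hs : 1 ≤ s) :
    Tendsto (fun β : ℝ => ∫ u in (-(Real.pi / β ^ 3))..(Real.pi / β ^ 3),
      Hc s (s * Real.pi ^ 2 / 12) β u) (𝓝[>] 0)
      (𝓝 (((Real.sqrt 2)⁻¹ ^ s * Real.sqrt (Real.pi / (s * Real.pi ^ 2 / 12)) : ℝ) : ℂ)) := by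
  set c : ℝ := s * Real.pi ^ 2 / 12 with hcdef
  have hlim : ∫ u : ℝ, ((((Real.sqrt 2)⁻¹ ^ s * Real.exp (-c * u ^ 2) : ℝ)) : ℂ) =
      (((Real.sqrt 2)⁻¹ ^ s * Real.sqrt (Real.pi / c) : ℝ) : ℂ) := by
    rw [integral_complex_ofReal, integral_const_mul, integral_gaussian]
  rw [← hlim]
  have h0 := Hc_tendsto s 0
  rw [← hcdef] at h0
  set B := ‖((((Real.sqrt 2)⁻¹ ^ s * Real.exp (-c * 0 ^ 2) : ℝ)) : ℂ)‖ + 1 with hB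
  have hbd : ∀ᶠ β in 𝓝[>] (0:ℝ), ‖Hc s c β 0‖ < B :=
    h0.norm.eventually (gt_mem_nhds (by rw [hB]; linarith))
  have hpos : ∀ᶠ β in 𝓝[>] (0:ℝ), 0 < β := self_mem_nhdsWithin
  have hhalf : ∀ᶠ β in 𝓝[>] (0:ℝ), β < 1 / 2 :=
    nhdsWithin_le_nhds (gt_mem_nhds (by norm_num : (0:ℝ) < 1 / 2))
  have hle {β : ℝ} (hβ : 0 < β) : -(Real.pi / β ^ 3) ≤ Real.pi / β ^ 3 := by
    have := Real.pi_pos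
    have : 0 < Real.pi / β ^ 3 := by positivity
    linarith
  have key : Tendsto (fun β : ℝ => ∫ u, (Set.Ioc (-(Real.pi / β ^ 3)) (Real.pi / β ^ 3)).indicator
      (Hc s c β) u) (𝓝[>] 0)
      (𝓝 (∫ u : ℝ, ((((Real.sqrt 2)⁻¹ ^ s * Real.exp (-c * u ^ 2) : ℝ)) : ℂ))) := by
    apply tendsto_integral_filter_of_dominated_convergence
      (fun u => B * (24576 * Real.pi ^ 2 * (1 + u ^ 2)⁻¹))
    · filter_upwards [hpos] with β hβ
      exact (Hc_continuous s c hβ).aestronglyMeasurable.indicator measurableSet_Ioc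
    · filter_upwards [hpos, hhalf, hbd] with β hβ hβ2 hb
      refine .of_forall fun u => ?_
      have hB0 : 0 ≤ B := by positivity
      by_cases hu : u ∈ Set.Ioc (-(Real.pi / β ^ 3)) (Real.pi / β ^ 3)
      · rw [Set.indicator_of_mem hu]
        have hu' : |β ^ 3 * u| ≤ Real.pi := by
          have h3 : 0 < β ^ 3 := by positivity
          rw [abs_mul, abs_of_pos h3, mul_comm, ← le_div_iff₀ h3, abs_le]
          exact ⟨hu.1.le, hu.2⟩
        refine (Hc_norm_le s hs c hβ hβ2.le hu').trans ?_
        gcongr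
      · rw [Set.indicator_of_notMem hu, norm_zero]
        positivity
    · exact (integrable_inv_one_add_sq.const_mul _).const_mul _
    · refine .of_forall fun u => ?_
      refine (Hc_tendsto s u).congr' ?_
      have hinf : Tendsto (fun β : ℝ => Real.pi / β ^ 3) (𝓝[>] 0) atTop := by
        have h1 : Tendsto (fun β : ℝ => β⁻¹ ^ 3) (𝓝[>] 0) atTop :=
          (tendsto_pow_atTop (by norm_num)).comp tendsto_inv_nhdsGT_zero
        refine (h1.const_mul_atTop Real.pi_pos).congr fun β => ?_
        rw [inv_pow, div_eq_mul_inv]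
      filter_upwards [hinf.eventually_gt_atTop |u|] with β hβ
      rw [Set.indicator_of_mem]
      have := abs_lt.1 hβ
      exact ⟨this.1, this.2.le⟩
  refine key.congr' ?_
  filter_upwards [hpos] with β hβ
  rw [integral_indicator measurableSet_Ioc, intervalIntegral.integral_of_le (hle hβ)]

lemma count_formula (s N : ℕ) (c : ℝ) {β : ℝ} (hβ : 0 < β) (hN : N * β ^ 4 = c) :
    2 * Real.pi * ({k : Fin s → ℕ | norm1Vec k = N}.ncard : ℝ) =
      β ^ 3 * Real.exp (2 * c / β ^ 2) * (∫ u in (-(Real.pi / β ^ 3))..(Real.pi / β ^ 3),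
        Hc s c β u).re := by
  have h := cauchy_formula s N (α := β ^ 2) (by positivity)
  have hb : (β : ℂ) ≠ 0 := by exact_mod_cast hβ.ne'
  have hb3 : β ^ 3 ≠ 0 := by positivity
  have hNc : (N : ℂ) * (β : ℂ) ^ 4 = c := by rw [← hN]; push_cast; ring
  have hs := intervalIntegral.smul_integral_comp_mul_left (a := -(Real.pi / β ^ 3))
    (b := Real.pi / β ^ 3)
    (fun θ : ℝ => GG (cexp (-(((β ^ 2 : ℝ) : ℂ) + I * θ))) ^ s * cexp (N * (((β ^ 2 : ℝ) : ℂ) + I * θ)))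
    (β ^ 3)
  rw [show β ^ 3 * -(Real.pi / β ^ 3) = -Real.pi by field_simp,
    show β ^ 3 * (Real.pi / β ^ 3) = Real.pi by field_simp, h] at hs
  have e (u : ℝ) : GG (cexp (-(((β ^ 2 : ℝ) : ℂ) + I * (β ^ 3 * u : ℝ)))) ^ s *
      cexp (N * (((β ^ 2 : ℝ) : ℂ) + I * (β ^ 3 * u : ℝ))) =
      (Real.exp (2 * c / β ^ 2) : ℝ) * Hc s c β u := by
    have et : ((β ^ 2 : ℝ) : ℂ) + I * (β ^ 3 * u : ℝ) = tauf β u := by unfold tauf; push_cast; ring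
    have ee : cexp (N * tauf β u) = (Real.exp (2 * c / β ^ 2) : ℝ) *
        cexp (-(c / (β:ℂ) ^ 2) + I * c * u / β) := by
      rw [ofReal_exp, ← Complex.exp_add]
      congr 1
      unfold tauf
      push_cast
      rw [← hNc]
      field_simp
      ring
    rw [et, ee]
    unfold Hc
    ring
  simp_rw [e] at hs
  rw [intervalIntegral.integral_const_mul] at hs
  have hre := congrArg Complex.re hs
  rw [Complex.real_smul, ← mul_assoc, ← ofReal_mul, re_ofReal_mul] at hre
  rw [hre, show (2 * (Real.pi : ℂ) * ({k : Fin s → ℕ | norm1Vec k = N}.ncard : ℂ)) =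
    ((2 * Real.pi * ({k : Fin s → ℕ | norm1Vec k = N}.ncard : ℝ) : ℝ) : ℂ) by push_cast; rfl,
    ofReal_re]

end analytic

/-- asymptotics of the number of `𝐤 ∈ ℕ₀^s ∖ {0}` with `‖𝛋‖₁ = N`:
it is `∼ (C/N^{3/4})·exp(π√(sN/3))` for some constant `C > 0` depending on `s`. -/
theorem count_eq_asymptotic (s : ℕ) (hs : 1 ≤ s) :
    ∃ C : ℝ, 0 < C ∧
      Filter.Tendsto
        (fun N : ℕ => ({k : Fin s → ℕ | k ≠ 0 ∧ norm1Vec k = N}.ncard : ℝ) /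
          (C / (N : ℝ) ^ ((3 : ℝ)/4) * Real.exp (Real.pi * Real.sqrt (s * N / 3))))
        Filter.atTop (nhds 1) := by
  have hpi := Real.pi_pos
  have hs0 : (0:ℝ) < s := by exact_mod_cast hs
  have hJ := J_tendsto s hs
  set c : ℝ := s * Real.pi ^ 2 / 12 with hc
  have hc0 : 0 < c := by positivity
  set L : ℝ := (Real.sqrt 2)⁻¹ ^ s * Real.sqrt (Real.pi / c) with hL
  have hL0 : 0 < L := by positivity
  refine ⟨c ^ ((3:ℝ)/4) * L / (2 * Real.pi), by positivity, ?_⟩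
  let b : ℕ → ℝ := fun N => (c / N) ^ ((1:ℝ)/4)
  have hb : Filter.Tendsto b Filter.atTop (nhdsWithin 0 (Set.Ioi 0)) := by
    rw [tendsto_nhdsWithin_iff]
    constructor
    · have h1 : Filter.Tendsto (fun N : ℕ => c / (N : ℝ)) Filter.atTop (nhds 0) :=
        tendsto_const_div_atTop_nhds_zero_nat c
      have := h1.rpow_const (p := (1:ℝ)/4) (Or.inr (by norm_num))
      rwa [Real.zero_rpow (by norm_num)] at this
    · filter_upwards [Filter.eventually_gt_atTop 0] with N hN
      have : (0:ℝ) < N := by exact_mod_cast hN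
      show 0 < (c / N) ^ ((1:ℝ)/4)
      positivity
  have hlim := ((Complex.continuous_re.tendsto _).comp (hJ.comp hb)).div_const L
  rw [Complex.ofReal_re, div_self hL0.ne'] at hlim
  refine hlim.congr' ?_
  filter_upwards [Filter.eventually_gt_atTop 0] with N hN
  have hN0 : (0:ℝ) < N := by exact_mod_cast hN
  have hbpos : 0 < b N := by show 0 < (c / N) ^ ((1:ℝ)/4); positivity
  have hq : 0 < c / N := by positivity
  have hb4 : b N ^ 4 = c / N := by
    show ((c / N) ^ ((1:ℝ)/4)) ^ 4 = _
    rw [← Real.rpow_natCast, ← Real.rpow_mul hq.le]; norm_num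
  have hb3 : b N ^ 3 = c ^ ((3:ℝ)/4) / (N:ℝ) ^ ((3:ℝ)/4) := by
    show ((c / N) ^ ((1:ℝ)/4)) ^ 3 = _
    rw [← Real.rpow_natCast, ← Real.rpow_mul hq.le, Real.div_rpow hc0.le hN0.le]; norm_num
  have hexp : 2 * c / b N ^ 2 = Real.pi * Real.sqrt (s * N / 3) := by
    have h2 : 0 < b N ^ 2 := by positivity
    refine (sq_eq_sq₀ (by positivity) (by positivity)).1 ?_
    rw [mul_pow, Real.sq_sqrt (by positivity), div_pow, ← pow_mul, hb4, hc]
    field_simp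
    norm_num
  have hf := count_formula s N c hbpos (by rw [hb4]; field_simp)
  have hset : {k : Fin s → ℕ | k ≠ 0 ∧ norm1Vec k = N} = {k : Fin s → ℕ | norm1Vec k = N} := by
    ext k
    simp only [Set.mem_ofPred_eq, and_iff_right_iff_imp]
    rintro h rfl
    have : norm1Vec (0 : Fin s → ℕ) = 0 := by simp [norm1Vec, norm1, bitFinset]
    omega
  rw [hset]
  rw [hexp] at hf
  simp only [Function.comp_apply]
  generalize (∫ u in (-(Real.pi / b N ^ 3))..(Real.pi / b N ^ 3), Hc s c (b N) u).re = J at hf ⊢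
  rw [hb3] at hf
  generalize ({k : Fin s → ℕ | norm1Vec k = N}.ncard : ℝ) = A at hf ⊢
  have hE := Real.exp_pos (Real.pi * Real.sqrt (s * N / 3))
  generalize Real.exp (Real.pi * Real.sqrt (s * N / 3)) = E at hf hE ⊢
  have hA : A = c ^ ((3:ℝ)/4) / (N:ℝ) ^ ((3:ℝ)/4) * E * J / (2 * Real.pi) := by
    rw [← hf]; field_simp
  have h1 : 0 < c ^ ((3:ℝ)/4) := by positivity
  have h2 : 0 < (N:ℝ) ^ ((3:ℝ)/4) := by positivity
  rw [hA]
  field_simp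

end MedianQMC
end

section
/- For all integers N ≥ 1 and s ≥ 1, |{𝐤 ∈ ℕ₀^s ∖ {0} : ‖𝛋‖₁ = N}| < (π√s / (2√(3N))) · exp(π√(sN/3)). -/
open MeasureTheory ProbabilityTheory
open scoped ENNReal

namespace MedianQMC


theorem mem_bitFinset (k i : ℕ) : i ∈ bitFinset k ↔ k.testBit i = true := by
  unfold bitFinset
  simp only [Finset.mem_filter, Finset.mem_range, and_iff_right_iff_imp]
  intro h
  have h1 := Nat.ge_two_pow_of_testBit h
  have h2 := @Nat.lt_two_pow_self i
  omega

theorem norm1_add (L r : ℕ) (h : r < 2 ^ L) : norm1 (2 ^ L + r) = norm1 r + (L + 1) := by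
  have hb : bitFinset (2 ^ L + r) = insert L (bitFinset r) := by
    ext i
    rw [Finset.mem_insert, mem_bitFinset, mem_bitFinset]
    rcases lt_trichotomy i L with hi | hi | hi
    · rw [Nat.testBit_two_pow_add_gt hi]
      simp [hi.ne]
    · subst hi
      simp [Nat.testBit_two_pow_add_eq, Nat.testBit_lt_two_pow h]
    · have h1 : 2 ^ L + r < 2 ^ i := by
        have : 2 ^ (L + 1) ≤ 2 ^ i := Nat.pow_le_pow_right (by norm_num) hi
        rw [pow_succ] at this
        omega
      have h2 : r < 2 ^ i := by omega
      simp [Nat.testBit_lt_two_pow h1, Nat.testBit_lt_two_pow h2, hi.ne']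
  have hn : L ∉ bitFinset r := by
    rw [mem_bitFinset, Nat.testBit_lt_two_pow h]; simp
  unfold norm1
  rw [hb, Finset.sum_insert hn, add_comm]

theorem lt_two_pow_norm1 (k : ℕ) : k < 2 ^ norm1 k := by
  apply Nat.lt_pow_two_of_testBit
  intro i hi
  by_contra hc
  have hc : k.testBit i = true := by simpa using hc
  have h1 : i + 1 ≤ norm1 k :=
    Finset.single_le_sum (f := fun i => i + 1) (fun _ _ => Nat.zero_le _) ((mem_bitFinset k i).2 hc)
  omega

/-- move the top bit up by one -/
def bump (k : ℕ) : ℕ := k + 2 ^ Nat.log 2 k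

theorem exists_top (k : ℕ) (h : k ≠ 0) :
    ∃ a r, r < 2 ^ a ∧ k = 2 ^ a + r ∧ bump k = 2 ^ (a + 1) + r := by
  have h1 := Nat.pow_log_le_self 2 h
  have h2 := Nat.lt_pow_succ_log_self (b := 2) (by norm_num) k
  rw [pow_succ] at h2
  refine ⟨Nat.log 2 k, k - 2 ^ Nat.log 2 k, by omega, by omega, ?_⟩
  unfold bump
  rw [pow_succ]
  omega

theorem norm1_bump (k : ℕ) (h : k ≠ 0) : norm1 (bump k) = norm1 k + 1 := by
  obtain ⟨a, r, hr, hk, hb⟩ := exists_top k h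
  rw [hb, norm1_add _ _ (by rw [pow_succ]; omega)]
  rw [hk, norm1_add _ _ hr]
  omega

theorem bump_ne (k : ℕ) : bump k ≠ 0 := by
  have : 0 < 2 ^ Nat.log 2 k := by positivity
  unfold bump; omega

theorem bump_inj (k l : ℕ) (hk : k ≠ 0) (hl : l ≠ 0) (h : bump k = bump l) : k = l := by
  obtain ⟨a, r, hr, hk, hb⟩ := exists_top k hk
  obtain ⟨a', r', hr', hk', hb'⟩ := exists_top l hl
  have h3 : 2 ^ (a + 1) + r = 2 ^ (a' + 1) + r' := by rw [← hb, ← hb', h]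
  rcases lt_trichotomy a a' with hi | hi | hi
  · have : 2 ^ (a + 1) ≤ 2 ^ a' := Nat.pow_le_pow_right (by norm_num) hi
    rw [pow_succ] at *
    omega
  · subst hi
    omega
  · have : 2 ^ (a' + 1) ≤ 2 ^ a := Nat.pow_le_pow_right (by norm_num) hi
    rw [pow_succ] at *
    omega

open Classical in
/-- a chosen element of the support -/
noncomputable def pick {s : ℕ} (hs : 1 ≤ s) (S : Finset (Fin s)) : Fin s :=
  if h : S.Nonempty then h.choose else ⟨0, hs⟩

theorem pick_mem {s : ℕ} (hs : 1 ≤ s) (S : Finset (Fin s)) (h : S.Nonempty) : pick hs S ∈ S := by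
  unfold pick
  rw [dif_pos h]
  exact h.choose_spec

/-- bump of a vector -/
noncomputable def vbump {s : ℕ} (hs : 1 ≤ s) (k : Fin s → ℕ) : Fin s → ℕ :=
  Function.update k (pick hs (supp k)) (bump (k (pick hs (supp k))))

theorem pick_ne {s : ℕ} (hs : 1 ≤ s) (k : Fin s → ℕ) (h : k ≠ 0) : k (pick hs (supp k)) ≠ 0 := by
  have hne : (supp k).Nonempty := by
    obtain ⟨j, hj⟩ := Function.ne_iff.1 h
    exact ⟨j, by simpa [supp] using hj⟩
  have := pick_mem hs _ hne
  simpa [supp] using this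

theorem supp_vbump {s : ℕ} (hs : 1 ≤ s) (k : Fin s → ℕ) (h : k ≠ 0) :
    supp (vbump hs k) = supp k := by
  ext j
  simp only [supp, Finset.mem_filter, Finset.mem_univ, true_and]
  by_cases hj : j = pick hs (supp k)
  · have h1 := pick_ne hs k h
    rw [← hj] at h1
    have h2 : vbump hs k j = bump (k j) := by
      unfold vbump
      rw [← hj]; simp
    rw [h2]
    simp [h1, bump_ne]
  · unfold vbump
    rw [Function.update_of_ne hj]

theorem norm_vbump {s : ℕ} (hs : 1 ≤ s) (k : Fin s → ℕ) (h : k ≠ 0) :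
    norm1Vec (vbump hs k) = norm1Vec k + 1 := by
  have h1 := pick_ne hs k h
  unfold norm1Vec
  rw [← Finset.add_sum_erase _ _ (Finset.mem_univ (pick hs (supp k))),
    ← Finset.add_sum_erase (a := pick hs (supp k)) _ (fun j => norm1 (k j)) (Finset.mem_univ _)]
  have h2 : ∑ x ∈ Finset.univ.erase (pick hs (supp k)), norm1 (vbump hs k x)
      = ∑ x ∈ Finset.univ.erase (pick hs (supp k)), norm1 (k x) := by
    apply Finset.sum_congr rfl
    intro x hx
    unfold vbump
    rw [Function.update_of_ne (Finset.ne_of_mem_erase hx)]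
  rw [h2]
  have h3 : vbump hs k (pick hs (supp k)) = bump (k (pick hs (supp k))) := by
    simp [vbump]
  rw [h3, norm1_bump _ h1]
  omega

theorem vbump_inj {s : ℕ} (hs : 1 ≤ s) (k l : Fin s → ℕ) (hk : k ≠ 0) (hl : l ≠ 0)
    (h : vbump hs k = vbump hs l) : k = l := by
  have hS : supp k = supp l := by rw [← supp_vbump hs k hk, ← supp_vbump hs l hl, h]
  have h1 := pick_ne hs k hk
  have h2 := pick_ne hs l hl
  unfold vbump at h
  rw [← hS] at h h2
  funext j
  have hj := congrFun h j
  by_cases hc : j = pick hs (supp k)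
  · rw [← hc] at hj h1 h2
    simp only [Function.update_self] at hj
    exact bump_inj _ _ h1 h2 hj
  · rwa [Function.update_of_ne hc, Function.update_of_ne hc] at hj

/-- vectors with all entries having at most `L` bits -/
def box (s L : ℕ) : Finset (Fin s → ℕ) := Fintype.piFinset fun _ => Finset.range (2 ^ L)

theorem mem_box {s : ℕ} (L : ℕ) (k : Fin s → ℕ) (h : norm1Vec k ≤ L) : k ∈ box s L := by
  unfold box
  rw [Fintype.mem_piFinset]
  intro j
  rw [Finset.mem_range]
  have h1 : norm1 (k j) ≤ norm1Vec k :=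
    Finset.single_le_sum (f := fun j => norm1 (k j)) (fun _ _ => Nat.zero_le _) (Finset.mem_univ j)
  exact (lt_two_pow_norm1 _).trans_le (Nat.pow_le_pow_right (by norm_num) (h1.trans h))

theorem norm1_zero : norm1 0 = 0 := by simp [norm1, bitFinset]

theorem norm1Vec_zero {s : ℕ} : norm1Vec (0 : Fin s → ℕ) = 0 := by
  simp [norm1Vec, norm1_zero]

theorem card_mono {s : ℕ} (hs : 1 ≤ s) (L N M : ℕ) (hN : 1 ≤ N) (hL : N + M ≤ L) :
    ((box s L).filter (fun k => norm1Vec k = N)).card ≤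
      ((box s L).filter (fun k => norm1Vec k = N + M)).card := by
  induction M with
  | zero => simp
  | succ M ih =>
    refine (ih (by omega)).trans ?_
    have hne : ∀ k : Fin s → ℕ, norm1Vec k = N + M → k ≠ 0 := by
      rintro k hk rfl
      rw [norm1Vec_zero] at hk
      omega
    apply Finset.card_le_card_of_injOn (vbump hs)
    · intro k hk
      have hk := (Finset.mem_filter.1 hk).2
      have h1 := norm_vbump hs k (hne k hk)
      exact Finset.mem_coe.2 (Finset.mem_filter.2 ⟨mem_box _ _ (by omega), by omega⟩)
    · intro k hk l hl h
      exact vbump_inj hs k l (hne _ (Finset.mem_filter.1 hk).2) (hne _ (Finset.mem_filter.1 hl).2) h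

theorem sum_range_norm1 (x : ℝ) (L : ℕ) :
    ∑ k ∈ Finset.range (2 ^ L), x ^ norm1 k = ∏ l ∈ Finset.range L, (1 + x ^ (l + 1)) := by
  induction L with
  | zero => simp [norm1_zero]
  | succ L ih =>
    rw [Finset.prod_range_succ, ← ih, pow_succ, mul_two, Finset.sum_range_add, mul_add, mul_one]
    congr 1
    rw [Finset.sum_mul]
    apply Finset.sum_congr rfl
    intro r hr
    rw [norm1_add _ _ (Finset.mem_range.1 hr), pow_add]

theorem sum_box (x : ℝ) (s L : ℕ) :
    ∑ k ∈ box s L, x ^ norm1Vec k = (∏ l ∈ Finset.range L, (1 + x ^ (l + 1))) ^ s := by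
  rw [← sum_range_norm1]
  unfold box norm1Vec
  have := Finset.prod_univ_sum (fun _ : Fin s => Finset.range (2 ^ L))
    (fun _ k => x ^ norm1 k)
  simp only [Finset.prod_const, Finset.card_univ, Fintype.card_fin, Finset.prod_pow_eq_pow_sum] at this
  exact this.symm

theorem euler (x : ℝ) (L : ℕ) :
    (∏ l ∈ Finset.range L, (1 + x ^ (l + 1))) * (∏ i ∈ Finset.range L, (1 - x ^ (2 * i + 1)))
      * (∏ i ∈ Finset.range L, (1 - x ^ (i + 1))) = ∏ i ∈ Finset.range (2 * L), (1 - x ^ (i + 1)) := by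
  induction L with
  | zero => simp
  | succ L ih =>
    rw [show 2 * (L + 1) = 2 * L + 1 + 1 by ring, Finset.prod_range_succ _ (2 * L + 1),
      Finset.prod_range_succ _ (2 * L), ← ih, Finset.prod_range_succ, Finset.prod_range_succ,
      Finset.prod_range_succ]
    ring

theorem prod_le (x : ℝ) (h0 : 0 < x) (h1 : x < 1) (L : ℕ) :
    (∏ l ∈ Finset.range L, (1 + x ^ (l + 1))) * (∏ i ∈ Finset.range L, (1 - x ^ (2 * i + 1))) ≤ 1 := by
  have hpos : ∀ n : ℕ, 0 < 1 - x ^ (n + 1) := fun n =>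
    sub_pos.2 (pow_lt_one₀ h0.le h1 (by omega))
  have hp : 0 < ∏ i ∈ Finset.range L, (1 - x ^ (i + 1)) := Finset.prod_pos fun i _ => hpos i
  refine le_of_mul_le_mul_right ?_ hp
  rw [euler, two_mul, Finset.prod_range_add, one_mul]
  refine mul_le_of_le_one_right hp.le ?_
  refine Finset.prod_le_one (fun i _ => (hpos _).le) (fun i _ => ?_)
  have : 0 < x ^ (L + i + 1) := by positivity
  linarith

theorem term_le (t : ℝ) (ht : 0 < t) (L m : ℕ) :
    ∑ i ∈ Finset.range L, (Real.exp (-t) ^ (2 * i + 1)) ^ (m + 1) / ((m : ℝ) + 1) ≤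
      1 / (2 * t) * (1 / ((m : ℝ) + 1) ^ 2) := by
  set y : ℝ := Real.exp (-t) ^ (m + 1) with hy
  set u : ℝ := ((m : ℝ) + 1) * t with hu
  have hm : (0 : ℝ) < (m : ℝ) + 1 := by positivity
  have hu0 : 0 < u := by positivity
  have hyu : y = Real.exp (-u) := by
    rw [hy, ← Real.exp_nat_mul]; congr 1; push_cast; ring
  have hy0 : 0 < y := by rw [hyu]; positivity
  have hy1 : y < 1 := by rw [hyu]; exact Real.exp_lt_one_iff.2 (by linarith)
  have hy2 : y ^ 2 < 1 := pow_lt_one₀ hy0.le hy1 (by norm_num)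
  have hs : u ≤ Real.sinh u := Real.self_le_sinh_iff.2 hu0.le
  rw [Real.sinh_eq, ← hyu] at hs
  have he : Real.exp u * y = 1 := by rw [hyu, ← Real.exp_add]; simp
  have key : y * (2 * u) ≤ 1 - y ^ 2 := by nlinarith
  have hsum : ∑ i ∈ Finset.range L, y ^ (2 * i + 1) ≤ 1 / (2 * u) := by
    have h1 : ∑ i ∈ Finset.range L, y ^ (2 * i + 1) = y * ∑ i ∈ Finset.range L, (y ^ 2) ^ i := by
      rw [Finset.mul_sum]
      apply Finset.sum_congr rfl
      intro i _
      rw [pow_succ, pow_mul]; ring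
    have h2 : ∑ i ∈ Finset.range L, (y ^ 2) ^ i * (1 - y ^ 2) ≤ 1 := by
      rw [← Finset.sum_mul, geom_sum_mul_neg]
      have : 0 < (y ^ 2) ^ L := by positivity
      linarith
    rw [← Finset.sum_mul] at h2
    have h3 : 0 ≤ ∑ i ∈ Finset.range L, (y ^ 2) ^ i := Finset.sum_nonneg fun i _ => by positivity
    rw [h1, le_div_iff₀ (by positivity)]
    nlinarith
  rw [← Finset.sum_div, div_le_iff₀ hm]
  have h4 : ∑ i ∈ Finset.range L, (Real.exp (-t) ^ (2 * i + 1)) ^ (m + 1) =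
      ∑ i ∈ Finset.range L, y ^ (2 * i + 1) := by
    apply Finset.sum_congr rfl
    intro i _
    rw [hy, ← pow_mul, ← pow_mul, mul_comm]
  rw [h4]
  refine hsum.trans (le_of_eq ?_)
  rw [hu]
  field_simp

theorem log_bound (t : ℝ) (ht : 0 < t) (L : ℕ) :
    ∑ i ∈ Finset.range L, -Real.log (1 - Real.exp (-t) ^ (2 * i + 1)) ≤ Real.pi ^ 2 / (12 * t) := by
  have hx1 : Real.exp (-t) < 1 := Real.exp_lt_one_iff.2 (by linarith)
  have hA : HasSum (fun m : ℕ => ∑ i ∈ Finset.range L,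
      (Real.exp (-t) ^ (2 * i + 1)) ^ (m + 1) / ((m : ℝ) + 1))
      (∑ i ∈ Finset.range L, -Real.log (1 - Real.exp (-t) ^ (2 * i + 1))) := by
    apply hasSum_sum
    intro i _
    apply Real.hasSum_pow_div_log_of_abs_lt_one
    rw [abs_of_pos (by positivity)]
    exact pow_lt_one₀ (by positivity) hx1 (by omega)
  have hB : HasSum (fun m : ℕ => 1 / (2 * t) * (1 / ((m : ℝ) + 1) ^ 2))
      (1 / (2 * t) * (Real.pi ^ 2 / 6)) := by
    apply HasSum.mul_left
    have := (hasSum_nat_add_iff' (f := fun n : ℕ => (1 : ℝ) / (n : ℝ) ^ 2) 1).2 hasSum_zeta_two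
    simpa using this
  have := hasSum_le (fun m => term_le t ht L m) hA hB
  refine this.trans (le_of_eq ?_)
  field_simp
  norm_num

theorem prod_bound (t : ℝ) (ht : 0 < t) (L : ℕ) :
    ∏ l ∈ Finset.range L, (1 + Real.exp (-t) ^ (l + 1)) ≤ Real.exp (Real.pi ^ 2 / (12 * t)) := by
  have hx1 : Real.exp (-t) < 1 := Real.exp_lt_one_iff.2 (by linarith)
  have hpos : ∀ i : ℕ, 0 < 1 - Real.exp (-t) ^ (2 * i + 1) := fun n =>
    sub_pos.2 (pow_lt_one₀ (by positivity) hx1 (by omega))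
  have h1 := prod_le _ (Real.exp_pos (-t)) hx1 L
  have h2 : ∏ i ∈ Finset.range L, (1 - Real.exp (-t) ^ (2 * i + 1)) =
      Real.exp (-∑ i ∈ Finset.range L, -Real.log (1 - Real.exp (-t) ^ (2 * i + 1))) := by
    rw [Finset.sum_neg_distrib, neg_neg, Real.exp_sum]
    exact Finset.prod_congr rfl fun i _ => (Real.exp_log (hpos i)).symm
  rw [h2, Real.exp_neg (∑ i ∈ Finset.range L, _), ← div_eq_mul_inv, div_le_one (Real.exp_pos _)] at h1
  exact h1.trans (Real.exp_le_exp.2 (log_bound t ht L))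

theorem main_bound (t : ℝ) (ht : 0 < t) (N s : ℕ) (hN : 1 ≤ N) (hs : 1 ≤ s) :
    ({k : Fin s → ℕ | k ≠ 0 ∧ norm1Vec k = N}.ncard : ℝ) ≤
      (1 - Real.exp (-t)) * Real.exp (N * t + s * (Real.pi ^ 2 / (12 * t))) := by
  set x := Real.exp (-t) with hx
  have hx0 : 0 < x := Real.exp_pos _
  have hx1 : x < 1 := Real.exp_lt_one_iff.2 (by linarith)
  set a : ℕ := {k : Fin s → ℕ | k ≠ 0 ∧ norm1Vec k = N}.ncard with ha
  have hfin : ∀ M : ℕ, (a : ℝ) * x ^ N * ∑ i ∈ Finset.range M, x ^ i ≤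
      Real.exp (s * (Real.pi ^ 2 / (12 * t))) := by
    intro M
    have hcard : ∀ i ∈ Finset.range M,
        a ≤ ((box s (N + M)).filter (fun k => norm1Vec k = N + i)).card := by
      intro i hi
      rw [Finset.mem_range] at hi
      refine le_trans ?_ (card_mono hs (N + M) N i hN (by omega))
      rw [ha, ← Set.ncard_coe_finset]
      apply Set.ncard_le_ncard _ (Finset.finite_toSet _)
      rintro k ⟨_, hk⟩
      exact Finset.mem_coe.2 (Finset.mem_filter.2 ⟨mem_box _ _ (by omega), hk⟩)
    calc (a : ℝ) * x ^ N * ∑ i ∈ Finset.range M, x ^ i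
        = ∑ i ∈ Finset.range M, (a : ℝ) * x ^ (N + i) := by
          rw [Finset.mul_sum]
          exact Finset.sum_congr rfl fun i _ => by rw [pow_add]; ring
      _ ≤ ∑ i ∈ Finset.range M,
            ∑ k ∈ (box s (N + M)).filter (fun k => norm1Vec k = N + i), x ^ norm1Vec k := by
          apply Finset.sum_le_sum
          intro i hi
          have h1 : ∑ k ∈ (box s (N + M)).filter (fun k => norm1Vec k = N + i), x ^ norm1Vec k
              = (((box s (N + M)).filter (fun k => norm1Vec k = N + i)).card : ℝ) * x ^ (N + i) := by
            rw [← nsmul_eq_mul, ← Finset.sum_const]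
            exact Finset.sum_congr rfl fun k hk => by rw [(Finset.mem_filter.1 hk).2]
          rw [h1]
          have := hcard i hi
          gcongr
      _ ≤ ∑ k ∈ box s (N + M), x ^ norm1Vec k := by
          rw [← Finset.sum_biUnion]
          · apply Finset.sum_le_sum_of_subset_of_nonneg
            · intro k hk
              obtain ⟨i, _, hk⟩ := Finset.mem_biUnion.1 hk
              exact (Finset.mem_filter.1 hk).1
            · intros; positivity
          · intro i _ j _ hij
            apply Finset.disjoint_left.2
            intro k hk hk'
            have h1 := (Finset.mem_filter.1 hk).2
            have h2 := (Finset.mem_filter.1 hk').2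
            omega
      _ = (∏ l ∈ Finset.range (N + M), (1 + x ^ (l + 1))) ^ s := sum_box _ _ _
      _ ≤ (Real.exp (Real.pi ^ 2 / (12 * t))) ^ s := by
          apply pow_le_pow_left₀ _ (prod_bound t ht _)
          exact Finset.prod_nonneg fun i _ => by positivity
      _ = _ := by rw [← Real.exp_nat_mul]
  have hlim : (a : ℝ) * x ^ N * (1 - x)⁻¹ ≤ Real.exp (s * (Real.pi ^ 2 / (12 * t))) :=
    le_of_tendsto' ((hasSum_geometric_of_lt_one hx0.le hx1).tendsto_sum_nat.const_mul _) hfin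
  rw [← div_eq_mul_inv, div_le_iff₀ (by linarith)] at hlim
  have hxN : x ^ N * Real.exp (N * t) = 1 := by
    rw [hx, ← Real.exp_nat_mul, ← Real.exp_add]
    simp
  have h5 := mul_le_mul_of_nonneg_right hlim (Real.exp_pos (N * t)).le
  rw [mul_assoc, hxN, mul_one] at h5
  rw [Real.exp_add]
  linarith

/-- finite-`N` bound on the number of `𝐤 ∈ ℕ₀^s ∖ {0}` with `‖𝛋‖₁ = N`. -/
theorem count_eq_lt (N s : ℕ) (hN : 1 ≤ N) (hs : 1 ≤ s) :
    ({k : Fin s → ℕ | k ≠ 0 ∧ norm1Vec k = N}.ncard : ℝ) <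
      Real.pi * Real.sqrt s / (2 * Real.sqrt (3 * N)) *
        Real.exp (Real.pi * Real.sqrt (s * N / 3)) := by
  have hN' : (0 : ℝ) < N := by exact_mod_cast hN
  have hs' : (0 : ℝ) < s := by exact_mod_cast hs
  set t : ℝ := Real.pi * Real.sqrt s / (2 * Real.sqrt (3 * N)) with htd
  have hπ := Real.pi_pos
  have ht : 0 < t := by positivity
  have h := main_bound t ht N s hN hs
  have hexp : N * t + s * (Real.pi ^ 2 / (12 * t)) = Real.pi * Real.sqrt (s * N / 3) := by
    obtain ⟨p, hp, hp2⟩ : ∃ p : ℝ, 0 < p ∧ p ^ 2 = s := ⟨√s, by positivity, Real.sq_sqrt hs'.le⟩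
    obtain ⟨q, hq, hq2⟩ : ∃ q : ℝ, 0 < q ∧ q ^ 2 = 3 * N :=
      ⟨√(3 * N), by positivity, Real.sq_sqrt (by positivity)⟩
    have hNq : (N : ℝ) = q ^ 2 / 3 := by linarith
    have e1 : √(s : ℝ) = p := by rw [← hp2, Real.sqrt_sq hp.le]
    have e2 : √(3 * N : ℝ) = q := by rw [← hq2, Real.sqrt_sq hq.le]
    have e3 : √(s * N / 3 : ℝ) = p * q / 3 := by
      rw [← hp2, hNq, show p ^ 2 * (q ^ 2 / 3) / 3 = (p * q / 3) ^ 2 by ring,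
        Real.sqrt_sq (by positivity)]
    rw [e3, htd, e1, e2, ← hp2, hNq]
    field_simp
    norm_num
  rw [hexp] at h
  refine h.trans_lt ?_
  have h6 : -t + 1 < Real.exp (-t) := Real.add_one_lt_exp (by linarith)
  have : 1 - Real.exp (-t) < t := by linarith
  gcongr

end MedianQMC
end
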